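/- Let k=(k_1,…,k_r) be a composition and let α∈ℂ∖ℕ. Then Σ_{l⪰k} ζ((←l^∨)_+; 1−α) = ζ⋆((←k^∨)_+; 1−α), where the sum is over all compositions l with l⪰k. -/

import Mathlib

open scoped BigOperators
open MeasureTheory

/-- Multiple polylogarithm `Li_k(z) = Σ_{n₁>⋯>n_r>0} z^{n₁}/(n₁^{k₁}⋯n_r^{k_r})`. -/
noncomputable def MPL (k : List ℕ) (z : ℝ) : ℝ :=
  if h : 0 < k.length then
    ∑' n : {n : Fin k.length → ℕ // StrictAnti n ∧ ∀ i, 0 < n i},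
      z ^ (n.1 ⟨0, h⟩) / ∏ i, (n.1 i : ℝ) ^ k.get i
  else 1

/-- Level-two multiple polylogarithm
`A(k;x) = 2^r Σ_{n₁>⋯>n_r>0, n_j ≡ r+1-j (mod 2)} x^{n₁}/(n₁^{k₁}⋯n_r^{k_r})`. -/
noncomputable def AFn (k : List ℕ) (x : ℝ) : ℝ :=
  if h : 0 < k.length then
    2 ^ k.length *
      ∑' n : {n : Fin k.length → ℕ //
          StrictAnti n ∧ (∀ i, 0 < n i) ∧ ∀ i, n i % 2 = (k.length - i.val) % 2},
        x ^ (n.1 ⟨0, h⟩) / ∏ i, (n.1 i : ℝ) ^ k.get i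
  else 1

/-- Multiple zeta value `ζ(k) = Σ_{n₁>⋯>n_r>0} ∏ 1/n_i^{k_i}`. -/
noncomputable def MZV (k : List ℕ) : ℝ :=
  ∑' n : {n : Fin k.length → ℕ // StrictAnti n ∧ ∀ i, 0 < n i},
    ∏ i, 1 / (n.1 i : ℝ) ^ k.get i

/-- Multiple zeta star value `ζ⋆(k) = Σ_{n₁≥⋯≥n_r>0} ∏ 1/n_i^{k_i}`. -/
noncomputable def MZSV (k : List ℕ) : ℝ :=
  ∑' n : {n : Fin k.length → ℕ // Antitone n ∧ ∀ i, 0 < n i},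
    ∏ i, 1 / (n.1 i : ℝ) ^ k.get i

/-- Multiple T-value `T(k) = 2^r Σ_{n₁>⋯>n_r>0, n_j ≡ r+1-j (mod 2)} ∏ 1/n_i^{k_i}`. -/
noncomputable def MTV (k : List ℕ) : ℝ :=
  2 ^ k.length *
    ∑' n : {n : Fin k.length → ℕ //
        StrictAnti n ∧ (∀ i, 0 < n i) ∧ ∀ i, n i % 2 = (k.length - i.val) % 2},
      ∏ i, 1 / (n.1 i : ℝ) ^ k.get i

/-- Hurwitz-type multiple zeta value `ζ(k;α) = Σ_{n₁>⋯>n_r>0} ∏ (n_i+α-1)^{-k_i}`. -/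
noncomputable def HMZV (k : List ℕ) (α : ℂ) : ℂ :=
  ∑' n : {n : Fin k.length → ℕ // StrictAnti n ∧ ∀ i, 0 < n i},
    ∏ i, ((n.1 i : ℂ) + α - 1) ^ (-(k.get i : ℤ))

/-- Hurwitz-type multiple zeta star value `ζ⋆(k;α) = Σ_{n₁≥⋯≥n_r>0} ∏ (n_i+α-1)^{-k_i}`. -/
noncomputable def HMZSV (k : List ℕ) (α : ℂ) : ℂ :=
  ∑' n : {n : Fin k.length → ℕ // Antitone n ∧ ∀ i, 0 < n i},
    ∏ i, ((n.1 i : ℂ) + α - 1) ^ (-(k.get i : ℤ))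

/-- Hurwitz-type multiple T-value
`T(k;α) = Σ_{m₁>⋯>m_r>0} 2^r ∏_i (2m_i - r - 2 + i + α)^{-k_i}` (1-indexed `i`). -/
noncomputable def HMTV (k : List ℕ) (α : ℂ) : ℂ :=
  ∑' n : {n : Fin k.length → ℕ // StrictAnti n ∧ ∀ i, 0 < n i},
    2 ^ k.length *
      ∏ i, (2 * (n.1 i : ℂ) - (k.length : ℂ) - 1 + (i.val : ℂ) + α) ^ (-(k.get i : ℤ))

/-- The boolean word (sequence of bits between consecutive units) of a composition. -/
def toWord : List ℕ → List Bool
  | [] => []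
  | [a] => List.replicate (a - 1) false
  | a :: b :: rest => List.replicate (a - 1) false ++ true :: toWord (b :: rest)

/-- The composition corresponding to a boolean word. -/
def fromWord : List Bool → List ℕ
  | [] => [1]
  | false :: w =>
    match fromWord w with
    | [] => [1]
    | a :: t => (a + 1) :: t
  | true :: w => 1 :: fromWord w

/-- Hoffman dual of a composition: swap commas and plus signs in
`k = (1+⋯+1, …, 1+⋯+1)`. -/
def HDual (k : List ℕ) : List ℕ := fromWord ((toWord k).map fun b => !b)

/-- `k₊ = (k₁+1, k₂, …, k_r)`. -/
def plusOne : List ℕ → List ℕ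
  | [] => []
  | a :: t => (a + 1) :: t

/-- `Refines l k` means the composition `k` can be obtained from `l`
by combining some consecutive parts of `l`, i.e. `l ⪰ k`. -/
inductive Refines : List ℕ → List ℕ → Prop
  | nil : Refines [] []
  | cons (b l k : List ℕ) : b ≠ [] → Refines l k → Refines (b ++ l) (b.sum :: k)

/-- Arakawa–Kaneko zeta function `ξ(s;k) = (1/Γ(s)) ∫_0^∞ t^{s-1}/(e^t-1) Li_k(1-e^{-t}) dt`. -/
noncomputable def xiAK (s : ℂ) (k : List ℕ) : ℂ :=
  (1 / Complex.Gamma s) *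
    ∫ t in Set.Ioi (0 : ℝ),
      (t : ℂ) ^ (s - 1) / ((Real.exp t : ℂ) - 1) * (MPL k (1 - Real.exp (-t)) : ℂ)

/-- Kaneko–Tsumura η-function `η(s;k) = (1/Γ(s)) ∫_0^∞ t^{s-1}/(1-e^t) Li_k(1-e^{t}) dt`. -/
noncomputable def etaKT (s : ℂ) (k : List ℕ) : ℂ :=
  (1 / Complex.Gamma s) *
    ∫ t in Set.Ioi (0 : ℝ),
      (t : ℂ) ^ (s - 1) / (1 - (Real.exp t : ℂ)) * (MPL k (1 - Real.exp t) : ℂ)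

/-- Kaneko–Tsumura ψ-function `ψ(s;k) = (1/Γ(s)) ∫_0^∞ t^{s-1} A(k; tanh(t/2))/sinh(t) dt`. -/
noncomputable def psiKT (s : ℂ) (k : List ℕ) : ℂ :=
  (1 / Complex.Gamma s) *
    ∫ t in Set.Ioi (0 : ℝ),
      (t : ℂ) ^ (s - 1) * ((AFn k (Real.tanh (t / 2)) / Real.sinh t : ℝ) : ℂ)

/-- Riemann zeta value `ζ(a) = Σ_{n>0} 1/n^a`. -/
noncomputable def zeta1 (a : ℕ) : ℝ := ∑' n : {n : ℕ // 0 < n}, 1 / (n.1 : ℝ) ^ a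

/-- Double zeta value `ζ(a,b) = Σ_{n₁>n₂>0} 1/(n₁^a n₂^b)`. -/
noncomputable def zeta2 (a b : ℕ) : ℝ :=
  ∑' p : {p : ℕ × ℕ // p.2 < p.1 ∧ 0 < p.2}, 1 / ((p.1.1 : ℝ) ^ a * (p.1.2 : ℝ) ^ b)

/-- Single T-value `T(a) = 2 Σ_{n>0 odd} 1/n^a`. -/
noncomputable def T1 (a : ℕ) : ℝ := 2 * ∑' n : {n : ℕ // 0 < n ∧ n % 2 = 1}, 1 / (n.1 : ℝ) ^ a

/-- Double T-value `T(a,b) = 4 Σ_{n₁>n₂>0, n₁ even, n₂ odd} 1/(n₁^a n₂^b)`. -/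
noncomputable def T2 (a b : ℕ) : ℝ :=
  4 * ∑' p : {p : ℕ × ℕ // p.2 < p.1 ∧ 0 < p.2 ∧ p.1 % 2 = 0 ∧ p.2 % 2 = 1},
    1 / ((p.1.1 : ℝ) ^ a * (p.1.2 : ℝ) ^ b)

/-!
Write a composition as a word in commas and plus signs. Under `l ↦ (←l)^∨` the relation `l ⪰ k`
becomes the statement that the word of `(←l)^∨` arises from that of `(←k)^∨` by turning some commas
into plus signs. On the other hand, split each inequality `n_i ≥ n_{i+1}` of a star sum into
`n_i > n_{i+1}` and `n_i = n_{i+1}`: the first case keeps the comma between the two exponents, the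
second turns it into a plus sign. For sums truncated at `n₁ < N` this is a finite identity, and it
passes to the limit because a first exponent of at least `2` makes all the series converge
absolutely.
-/

open Filter Topology

theorem refines_nil_left_iff {k : List ℕ} : Refines [] k ↔ k = [] := by
  refine ⟨fun h => ?_, fun h => h ▸ .nil⟩
  generalize hl : [] = l at h
  cases h with
  | nil => rfl
  | cons b l k hb _ => exact absurd (List.append_eq_nil_iff.1 hl.symm).1 hb

-- The first part of `l` either is a whole block, or shares its block with the next part.
theorem refines_cons_iff {a : ℕ} {l k : List ℕ} :
    Refines (a :: l) k ↔ (∃ k', Refines l k' ∧ a :: k' = k) ∨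
      ∃ k', Refines l k' ∧ k' ≠ [] ∧ k'.modifyHead (· + a) = k := by
  constructor
  · intro h
    generalize hL : a :: l = L at h
    cases h with
    | nil => simp at hL
    | cons b l' k' hb h =>
      match b, hb with
      | [b], _ =>
        obtain ⟨rfl, rfl⟩ := List.cons.inj hL
        exact .inl ⟨k', h, by simp⟩
      | b :: c :: t, _ =>
        obtain ⟨rfl, rfl⟩ := List.cons.inj hL
        exact .inr ⟨(c :: t).sum :: k', .cons (c :: t) l' k' (by simp) h, by simp, by
          simp [add_comm]⟩
  · rintro (⟨k', h, rfl⟩ | ⟨_, h, hk', rfl⟩)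
    · simpa using Refines.cons [a] l k' (by simp) h
    · cases h with
      | nil => contradiction
      | cons b l' k' hb h => simpa [add_comm] using Refines.cons (a :: b) l' k' (by simp) h

theorem Refines.append {l₁ k₁ l₂ k₂ : List ℕ} (h₁ : Refines l₁ k₁) (h₂ : Refines l₂ k₂) :
    Refines (l₁ ++ l₂) (k₁ ++ k₂) := by
  induction h₁ with
  | nil => exact h₂
  | cons b l k hb _ ih => simpa using Refines.cons b (l ++ l₂) (k ++ k₂) hb ih

theorem Refines.reverse {l k : List ℕ} (h : Refines l k) : Refines l.reverse k.reverse := by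
  induction h with
  | nil => exact .nil
  | cons b l k hb _ ih =>
    have hblock : Refines b.reverse [b.sum] := by
      simpa using Refines.cons b.reverse [] [] (by simpa using hb) .nil
    simpa using ih.append hblock

theorem refines_modifyHead_succ_iff {l k : List ℕ} :
    Refines (l.modifyHead (· + 1)) k ↔ ∃ k', Refines l k' ∧ k'.modifyHead (· + 1) = k := by
  cases l with
  | nil => simp [refines_nil_left_iff, eq_comm]
  | cons a l =>
    simp [refines_cons_iff, or_and_right, exists_or, and_assoc, Function.comp_def, add_assoc]

theorem fromWord_ne_nil (w : List Bool) : fromWord w ≠ [] := by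
  fun_cases fromWord w <;> simp

theorem fromWord_false_cons (w : List Bool) :
    fromWord (false :: w) = (fromWord w).modifyHead (· + 1) := by
  obtain ⟨a, t, h⟩ := List.exists_cons_of_ne_nil (fromWord_ne_nil w)
  simp [fromWord, h]

theorem modifyHead_fromWord_false_cons (c : ℕ) (w : List Bool) :
    (fromWord (false :: w)).modifyHead (· + c) = (fromWord w).modifyHead (· + (c + 1)) := by
  simp [fromWord_false_cons, Function.comp_def, add_assoc, add_comm 1]

theorem fromWord_true_cons (w : List Bool) : fromWord (true :: w) = 1 :: fromWord w := rfl

theorem pos_of_mem_fromWord {w : List Bool} {a : ℕ} (ha : a ∈ fromWord w) : 0 < a := by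
  induction w generalizing a with
  | nil => simp_all [fromWord]
  | cons b w ih =>
    obtain ⟨c, t, h⟩ := List.exists_cons_of_ne_nil (fromWord_ne_nil w)
    cases b with
    | false =>
      simp only [fromWord_false_cons, h, List.modifyHead_cons, List.mem_cons] at ha ih
      rcases ha with rfl | ha
      exacts [Nat.succ_pos c, ih (.inr ha)]
    | true =>
      rcases List.mem_cons.1 ha with rfl | ha
      exacts [Nat.one_pos, ih ha]

theorem toWord_one_cons {l : List ℕ} (hl : l ≠ []) : toWord (1 :: l) = true :: toWord l := by
  obtain ⟨b, t, rfl⟩ := List.exists_cons_of_ne_nil hl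
  rfl

theorem toWord_succ_cons {a : ℕ} (ha : 0 < a) (l : List ℕ) :
    toWord ((a + 1) :: l) = false :: toWord (a :: l) := by
  obtain ⟨a, rfl⟩ := Nat.exists_eq_add_one.2 ha
  cases l <;> simp [toWord, List.replicate_succ]

theorem toWord_fromWord (w : List Bool) : toWord (fromWord w) = w := by
  induction w with
  | nil => rfl
  | cons b w ih =>
    cases b with
    | false =>
      obtain ⟨a, t, h⟩ := List.exists_cons_of_ne_nil (fromWord_ne_nil w)
      have ha : 0 < a := pos_of_mem_fromWord (w := w) (by simp [h])
      rw [fromWord_false_cons, h, List.modifyHead_cons, toWord_succ_cons ha, ← h, ih]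
    | true => rw [fromWord_true_cons, toWord_one_cons (fromWord_ne_nil w), ih]

theorem fromWord_injective : Function.Injective fromWord :=
  Function.LeftInverse.injective toWord_fromWord

theorem exists_fromWord_eq {l : List ℕ} (hl : l ≠ []) (hpos : ∀ a ∈ l, 0 < a) :
    ∃ w, fromWord w = l := by
  induction l with
  | nil => contradiction
  | cons a t ih =>
    have ha : 0 < a := hpos a List.mem_cons_self
    induction a, ha using Nat.le_induction with
    | base =>
      rcases eq_or_ne t [] with rfl | ht
      · exact ⟨[], rfl⟩
      · obtain ⟨w, rfl⟩ := ih ht fun a ha => hpos a (List.mem_cons_of_mem _ ha)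
        exact ⟨true :: w, rfl⟩
    | succ a ha iha =>
      obtain ⟨w, hw⟩ := iha (List.cons_ne_nil _ _) fun c hc => by
        rcases List.mem_cons.1 hc with rfl | hc
        exacts [ha, hpos c (List.mem_cons_of_mem _ hc)]
      exact ⟨false :: w, by rw [fromWord_false_cons, hw, List.modifyHead_cons]⟩

/-- The words obtained from `w` by changing some letters `true` to `false`. With `true` standing
for a comma and `false` for a plus sign, these are the words of the compositions obtained from
that of `w` by combining consecutive parts. -/
def wordsBelow : List Bool → Finset (List Bool)
  | [] => {[]}
  | false :: w => (wordsBelow w).image (List.cons false)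
  | true :: w => (wordsBelow w).image (List.cons true) ∪ (wordsBelow w).image (List.cons false)

theorem mem_wordsBelow {v w : List Bool} : v ∈ wordsBelow w ↔ List.Forall₂ (· ≤ ·) v w := by
  induction w generalizing v with
  | nil => simp [wordsBelow]
  | cons b w ih =>
    cases b <;> simp [wordsBelow, List.forall₂_cons_right_iff, ih, eq_comm, or_comm]

theorem sum_wordsBelow_false_cons {M : Type*} [AddCommMonoid M] (g : List Bool → M)
    (w : List Bool) :
    ∑ v ∈ wordsBelow (false :: w), g v = ∑ v ∈ wordsBelow w, g (false :: v) :=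
  Finset.sum_image List.cons_injective.injOn

theorem sum_wordsBelow_true_cons {M : Type*} [AddCommMonoid M] (g : List Bool → M)
    (w : List Bool) :
    ∑ v ∈ wordsBelow (true :: w), g v =
      ∑ v ∈ wordsBelow w, g (true :: v) + ∑ v ∈ wordsBelow w, g (false :: v) := by
  have hdisj : Disjoint ((wordsBelow w).image (List.cons true))
      ((wordsBelow w).image (List.cons false)) := by
    simp [Finset.disjoint_left]
  rw [wordsBelow, Finset.sum_union hdisj, Finset.sum_image List.cons_injective.injOn,
    Finset.sum_image List.cons_injective.injOn]

theorem map_not_mem_wordsBelow_map_not {v w : List Bool} :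
    v.map (!·) ∈ wordsBelow (w.map (!·)) ↔ w ∈ wordsBelow v := by
  simp only [mem_wordsBelow, List.forall₂_map_left_iff, List.forall₂_map_right_iff]
  have hle : (fun a b : Bool => (!a) ≤ !b) = flip (· ≤ ·) := by
    ext a b
    exact compl_le_compl_iff_le
  rw [hle]
  exact ⟨.flip, .flip⟩

theorem refines_fromWord_iff {w : List Bool} {k : List ℕ} :
    Refines (fromWord w) k ↔ ∃ v ∈ wordsBelow w, fromWord v = k := by
  induction w generalizing k with
  | nil => simp [fromWord, wordsBelow, refines_cons_iff, refines_nil_left_iff]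
  | cons b w ih =>
    cases b with
    | false => simp [fromWord_false_cons, refines_modifyHead_succ_iff, ih, wordsBelow]
    | true =>
      simp [fromWord_false_cons, fromWord_true_cons, refines_cons_iff, ih, wordsBelow,
        or_and_right, exists_or, fromWord_ne_nil]

/-- The composition `k` whose reversal has Hoffman dual `fromWord w`. -/
def reverseDual (w : List Bool) : List ℕ := (fromWord (w.map (!·))).reverse

theorem map_not_map_not (w : List Bool) : (w.map (!·)).map (!·) = w := by
  simp [Function.comp_def]

theorem HDual_reverse_reverseDual (w : List Bool) : HDual (reverseDual w).reverse = fromWord w := by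
  rw [HDual, reverseDual, List.reverse_reverse, toWord_fromWord, map_not_map_not]

theorem reverseDual_injective : Function.Injective reverseDual := fun v w h =>
  fromWord_injective (by rw [← HDual_reverse_reverseDual, h, HDual_reverse_reverseDual])

theorem exists_reverseDual_eq {k : List ℕ} (hk : k ≠ []) (hpos : ∀ a ∈ k, 0 < a) :
    ∃ w, reverseDual w = k := by
  obtain ⟨w, hw⟩ := exists_fromWord_eq (l := k.reverse) (by simpa using hk) (by simpa using hpos)
  exact ⟨w.map (!·), by rw [reverseDual, map_not_map_not, hw, List.reverse_reverse]⟩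

theorem pos_of_mem_reverseDual {w : List Bool} {a : ℕ} (ha : a ∈ reverseDual w) : 0 < a :=
  pos_of_mem_fromWord (List.mem_reverse.1 ha)

theorem refines_reverseDual_iff {v w : List Bool} :
    Refines (reverseDual v) (reverseDual w) ↔ v ∈ wordsBelow w := by
  rw [← map_not_mem_wordsBelow_map_not]
  constructor
  · intro h
    obtain ⟨u, hu, huw⟩ := refines_fromWord_iff.1 (by simpa [reverseDual] using h.reverse)
    rwa [← fromWord_injective huw]
  · intro h
    exact (refines_fromWord_iff.2 ⟨_, h, rfl⟩).reverse

theorem setOf_refines_reverseDual (w : List Bool) :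
    {l | (∀ a ∈ l, 0 < a) ∧ Refines l (reverseDual w)} = reverseDual '' (wordsBelow w) := by
  ext l
  constructor
  · rintro ⟨hpos, hl⟩
    obtain ⟨v, rfl⟩ : ∃ v, reverseDual v = l := by
      refine exists_reverseDual_eq ?_ hpos
      rintro rfl
      exact fromWord_ne_nil _ (List.reverse_eq_nil_iff.1 (refines_nil_left_iff.1 hl))
    exact ⟨v, refines_reverseDual_iff.1 hl, rfl⟩
  · rintro ⟨v, hv, rfl⟩
    exact ⟨fun _ => pos_of_mem_reverseDual, refines_reverseDual_iff.2 hv⟩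

theorem plusOne_eq_modifyHead (l : List ℕ) : plusOne l = l.modifyHead (· + 1) := by
  cases l <;> rfl

section NestedSums

variable {ι R : Type*} [CommSemiring R]

/-- The tuple `n` decreases in the sense of `r`: strictly if `r` is `<`, weakly if `r` is `≤`. -/
def Descends (r : ι → ι → Prop) {d : ℕ} (n : Fin d → ι) : Prop := ∀ ⦃i j⦄, i < j → r (n j) (n i)

/-- The finite multiple sum `∑ y n₁ ^ k₁ ⋯ y n_d ^ k_d` over the `r`-descending tuples `n` with
entries in `s`; see `nestedSum_eq_sum_descends`. -/
def nestedSum (r : ι → ι → Prop) [DecidableRel r] (y : ι → R) : List ℕ → Finset ι → R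
  | [], _ => 1
  | a :: k, s => ∑ m ∈ s, y m ^ a * nestedSum r y k {m' ∈ s | r m' m}

theorem descends_cons {r : ι → ι → Prop} {d : ℕ} {m : ι} {n : Fin d → ι} :
    Descends r (Fin.cons m n : Fin (d + 1) → ι) ↔ (∀ i, r (n i) m) ∧ Descends r n := by
  simp [Descends, Fin.forall_fin_succ]

theorem descends_lt_eq_strictAnti [Preorder ι] {d : ℕ} :
    Descends (· < ·) = (StrictAnti : (Fin d → ι) → Prop) := rfl

theorem descends_le_eq_antitone [Preorder ι] {d : ℕ} :
    Descends (· ≤ ·) = (Antitone : (Fin d → ι) → Prop) :=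
  funext fun _ => propext antitone_iff_forall_lt.symm

open scoped Classical in
theorem nestedSum_eq_sum_descends (r : ι → ι → Prop) (y : ι → R) (k : List ℕ) (s : Finset ι) :
    nestedSum r y k s = ∑ n ∈ Fintype.piFinset (fun _ : Fin k.length => s) with Descends r n,
      ∏ i, y (n i) ^ k.get i := by
  induction k generalizing s with
  | nil => simp [nestedSum, Descends]
  | cons a k ih =>
    simp only [nestedSum, ih, Finset.mul_sum, Finset.sum_sigma']
    refine Finset.sum_bij' (fun p _ => (Fin.cons p.1 p.2 : Fin (k.length + 1) → ι))
      (fun n _ => ⟨n 0, Fin.tail n⟩) ?_ ?_ ?_ ?_ ?_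
    · rintro ⟨m, n⟩ h
      simp_all [descends_cons, Fin.forall_fin_succ]
    · intro n h
      rw [← Fin.cons_self_tail n, Finset.mem_filter, descends_cons] at h
      simp_all [Fin.forall_fin_succ, Fin.tail]
    · rintro ⟨m, n⟩ _
      simp
    · intro n _
      exact Fin.cons_self_tail n
    · rintro ⟨m, n⟩ _
      simp [Fin.prod_univ_succ]

variable [LinearOrder ι] (y : ι → R)

theorem nestedSum_le_cons_filter_le (b : ℕ) (k : List ℕ) {s : Finset ι} {m : ι} (hm : m ∈ s) :
    nestedSum (· ≤ ·) y (b :: k) {i ∈ s | i ≤ m} =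
      nestedSum (· ≤ ·) y (b :: k) {i ∈ s | i < m} +
        y m ^ b * nestedSum (· ≤ ·) y k {i ∈ s | i ≤ m} := by
  have hinsert : ({i ∈ s | i ≤ m} : Finset ι) = insert m {i ∈ s | i < m} := by
    ext i
    grind
  have hle {i : ι} (hi : i ≤ m) : ({j ∈ {j ∈ s | j ≤ m} | j ≤ i} : Finset ι) = {j ∈ s | j ≤ i} := by
    ext j
    grind
  have hlt {i : ι} (hi : i < m) : ({j ∈ {j ∈ s | j < m} | j ≤ i} : Finset ι) = {j ∈ s | j ≤ i} := by
    ext j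
    grind
  calc nestedSum (· ≤ ·) y (b :: k) {i ∈ s | i ≤ m}
      = ∑ i ∈ s with i ≤ m, y i ^ b * nestedSum (· ≤ ·) y k {j ∈ s | j ≤ i} :=
        Finset.sum_congr rfl fun i hi => by rw [hle (Finset.mem_filter.1 hi).2]
    _ = ∑ i ∈ s with i < m, y i ^ b * nestedSum (· ≤ ·) y k {j ∈ s | j ≤ i} +
          y m ^ b * nestedSum (· ≤ ·) y k {i ∈ s | i ≤ m} := by
        rw [hinsert, Finset.sum_insert (by simp), add_comm, ← hinsert]
    _ = _ := by
        congr 1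
        exact Finset.sum_congr rfl fun i hi => by rw [hlt (Finset.mem_filter.1 hi).2]

theorem nestedSum_le_cons (a : ℕ) {k : List ℕ} (hk : k ≠ []) (s : Finset ι) :
    nestedSum (· ≤ ·) y (a :: k) s =
      ∑ m ∈ s, y m ^ a * nestedSum (· ≤ ·) y k {i ∈ s | i < m} +
        nestedSum (· ≤ ·) y (k.modifyHead (· + a)) s := by
  obtain ⟨b, k, rfl⟩ := List.exists_cons_of_ne_nil hk
  simp only [List.modifyHead_cons]
  rw [nestedSum, nestedSum, ← Finset.sum_add_distrib]
  refine Finset.sum_congr rfl fun m hm => ?_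
  rw [nestedSum_le_cons_filter_le y b k hm]
  ring

theorem nestedSum_le_modifyHead_fromWord (w : List Bool) (c : ℕ) (s : Finset ι) :
    nestedSum (· ≤ ·) y ((fromWord w).modifyHead (· + c)) s =
      ∑ v ∈ wordsBelow w, nestedSum (· < ·) y ((fromWord v).modifyHead (· + c)) s := by
  induction w generalizing c s with
  | nil => simp [wordsBelow, fromWord, nestedSum]
  | cons b w ih =>
    cases b with
    | false =>
      simp only [sum_wordsBelow_false_cons, modifyHead_fromWord_false_cons]
      exact ih (c + 1) s
    | true =>
      have modifyHead_zero (l : List ℕ) : l.modifyHead (· + 0) = l := by cases l <;> rfl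
      have ih₀ (s : Finset ι) : nestedSum (· ≤ ·) y (fromWord w) s =
          ∑ v ∈ wordsBelow w, nestedSum (· < ·) y (fromWord v) s := by
        simpa only [modifyHead_zero] using ih 0 s
      simp only [sum_wordsBelow_true_cons, modifyHead_fromWord_false_cons, ← ih]
      simp only [fromWord_true_cons, List.modifyHead_cons]
      rw [nestedSum_le_cons y (1 + c) (fromWord_ne_nil w)]
      simp only [nestedSum, ih₀, Finset.mul_sum, add_comm 1 c]
      rw [Finset.sum_comm]

theorem nestedSum_le_plusOne_fromWord (w : List Bool) (s : Finset ι) :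
    nestedSum (· ≤ ·) y (plusOne (fromWord w)) s =
      ∑ v ∈ wordsBelow w, nestedSum (· < ·) y (plusOne (fromWord v)) s := by
  simp only [plusOne_eq_modifyHead]
  exact nestedSum_le_modifyHead_fromWord y w 1 s

end NestedSums

section Summability

theorem summable_prod_fin {g : ℕ → ℝ} (hg : 0 ≤ g) (hs : Summable g) (d : ℕ) :
    Summable fun n : Fin d → ℕ => ∏ i, g (n i) := by
  induction d with
  | zero => exact .of_finite
  | succ d ih =>
    rw [← (Fin.consEquiv fun _ => ℕ).summable_iff]
    refine (hs.mul_of_nonneg ih hg fun n => Finset.prod_nonneg fun i _ => hg _).congr fun p => ?_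
    simp [Fin.prod_univ_succ, Fin.consEquiv]

variable {d : ℕ} {n : Fin (d + 1) → ℕ}

theorem inv_le_prod_rpow_of_antitone (hn : Antitone n) (hpos : ∀ i, 0 < n i) :
    (n 0 : ℝ)⁻¹ ≤ ∏ i, (n i : ℝ) ^ (-(1 / (d + 1) : ℝ)) := by
  calc (n 0 : ℝ)⁻¹ = ∏ _i : Fin (d + 1), (n 0 : ℝ) ^ (-(1 / (d + 1) : ℝ)) := by
        rw [Finset.prod_const, Finset.card_univ, Fintype.card_fin, ← Real.rpow_mul_natCast
          (Nat.cast_nonneg _), ← Real.rpow_neg_one]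
        push_cast
        congr 1
        field_simp
    _ ≤ ∏ i, (n i : ℝ) ^ (-(1 / (d + 1) : ℝ)) :=
      Finset.prod_le_prod (fun _ _ => by positivity) fun i _ =>
        Real.rpow_le_rpow_of_nonpos (Nat.cast_pos.2 (hpos i)) (Nat.cast_le.2 (hn (Fin.zero_le i)))
          (neg_nonpos.2 (by positivity))

theorem prod_inv_pow_le (hpos : ∀ i, 0 < n i) {k : Fin (d + 1) → ℕ} (h₀ : 2 ≤ k 0)
    (hk : ∀ i, 0 < k i) :
    ∏ i, (n i : ℝ)⁻¹ ^ k i ≤ (n 0 : ℝ)⁻¹ * ∏ i, (n i : ℝ)⁻¹ := by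
  have hle_one (i) : (n i : ℝ)⁻¹ ≤ 1 := inv_le_one_of_one_le₀ (Nat.one_le_cast.2 (hpos i))
  rw [Fin.prod_univ_succ, Fin.prod_univ_succ fun i => (n i : ℝ)⁻¹, ← mul_assoc, ← sq]
  exact mul_le_mul (pow_le_pow_of_le_one (by positivity) (hle_one 0) h₀)
    (Finset.prod_le_prod (fun _ _ => by positivity) fun i _ =>
      pow_le_of_le_one (by positivity) (hle_one _) (hk _).ne') (by positivity) (by positivity)

-- The surplus factor `n₀⁻¹` is shared out equally: each index gets `n₀ ^ (-1/(d+1))`.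
theorem prod_inv_pow_le_prod_rpow (hn : Antitone n) (hpos : ∀ i, 0 < n i) {k : Fin (d + 1) → ℕ}
    (h₀ : 2 ≤ k 0) (hk : ∀ i, 0 < k i) :
    ∏ i, (n i : ℝ)⁻¹ ^ k i ≤ ∏ i, (n i : ℝ) ^ (-(1 / (d + 1) + 1) : ℝ) := by
  calc ∏ i, (n i : ℝ)⁻¹ ^ k i ≤ (n 0 : ℝ)⁻¹ * ∏ i, (n i : ℝ)⁻¹ := prod_inv_pow_le hpos h₀ hk
    _ ≤ (∏ i, (n i : ℝ) ^ (-(1 / (d + 1) : ℝ))) * ∏ i, (n i : ℝ)⁻¹ := by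
      gcongr
      exact inv_le_prod_rpow_of_antitone hn hpos
    _ = ∏ i, (n i : ℝ) ^ (-(1 / (d + 1) + 1) : ℝ) := by
      rw [← Finset.prod_mul_distrib]
      refine Finset.prod_congr rfl fun i _ => ?_
      rw [neg_add, Real.rpow_add (Nat.cast_pos.2 (hpos i)), Real.rpow_neg_one]

variable {𝕜 : Type*} [NormedField 𝕜] [CompleteSpace 𝕜] {y : ℕ → 𝕜}

theorem summable_antitone_prod_pow (hy : y =O[atTop] fun n => (n : ℝ)⁻¹) {k : Fin (d + 1) → ℕ}
    (h₀ : 2 ≤ k 0) (hk : ∀ i, 0 < k i) :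
    Summable fun n : {n : Fin (d + 1) → ℕ // Antitone n ∧ ∀ i, 0 < n i} =>
      ∏ i, y (n.1 i) ^ k i := by
  obtain ⟨C, hC, hbound⟩ := Asymptotics.bound_of_isBigO_nat_atTop hy
  have hmajorant : Summable fun n : Fin (d + 1) → ℕ =>
      (∏ i, C ^ k i) * ∏ i, (n i : ℝ) ^ (-(1 / (d + 1) + 1) : ℝ) := by
    have hfactor : Summable fun n : ℕ => (n : ℝ) ^ (-(1 / (d + 1) + 1) : ℝ) :=
      Real.summable_nat_rpow.2 (by linarith [show (0 : ℝ) < 1 / (d + 1) by positivity])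
    exact (summable_prod_fin (fun n => Real.rpow_nonneg n.cast_nonneg _) hfactor _).mul_left _
  refine .of_norm_bounded (hmajorant.comp_injective Subtype.val_injective) ?_
  rintro ⟨n, hn, hpos⟩
  calc ‖∏ i, y (n i) ^ k i‖ = ∏ i, ‖y (n i)‖ ^ k i := by simp
    _ ≤ ∏ i, (C * (n i : ℝ)⁻¹) ^ k i := by
      gcongr with i
      simpa using hbound (inv_ne_zero (Nat.cast_ne_zero.2 (hpos i).ne'))
    _ = (∏ i, C ^ k i) * ∏ i, (n i : ℝ)⁻¹ ^ k i := by simp only [mul_pow, Finset.prod_mul_distrib]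
    _ ≤ _ := mul_le_mul_of_nonneg_left (prod_inv_pow_le_prod_rpow hn hpos h₀ hk) (by positivity)

end Summability

section NestedSeries

variable {R : Type*} [CommSemiring R] [TopologicalSpace R]

/-- The infinite multiple series `∑ y n₁ ^ k₁ ⋯ y n_d ^ k_d` over the `r`-descending tuples `n` of
positive integers. The Hurwitz-type values are the case `y n = (n + β - 1)⁻¹`. -/
noncomputable def nestedSeries (r : ℕ → ℕ → Prop) (y : ℕ → R) (k : List ℕ) : R :=
  ∑' n : {n : Fin k.length → ℕ // Descends r n ∧ ∀ i, 0 < n i}, ∏ i, y (n.1 i) ^ k.get i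

theorem tendsto_nestedSum (r : ℕ → ℕ → Prop) [DecidableRel r] {y : ℕ → R} {k : List ℕ}
    (hs : Summable fun n : {n : Fin k.length → ℕ // Descends r n ∧ ∀ i, 0 < n i} =>
      ∏ i, y (n.1 i) ^ k.get i) :
    Tendsto (fun N => nestedSum r y k (Finset.Ico 1 N)) atTop (𝓝 (nestedSeries r y k)) := by
  classical
  let tuples (N : ℕ) : Finset (Fin k.length → ℕ) :=
    {n ∈ Fintype.piFinset fun _ => Finset.Ico 1 N | Descends r n}
  have mem_tuples {N n} : n ∈ tuples N ↔ (∀ i, 0 < n i ∧ n i < N) ∧ Descends r n := by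
    simp [tuples, Nat.one_le_iff_ne_zero, Nat.pos_iff_ne_zero]
  have htuples : Tendsto (fun N => (tuples N).subtype fun n => Descends r n ∧ ∀ i, 0 < n i)
      atTop atTop := by
    refine tendsto_atTop_finset_of_monotone (fun N M hNM n hn => ?_) ?_
    · simp only [Finset.mem_subtype, mem_tuples] at hn ⊢
      exact ⟨fun i => ⟨(hn.1 i).1, (hn.1 i).2.trans_le hNM⟩, hn.2⟩
    · rintro ⟨n, hn, hpos⟩
      refine ⟨(∑ i, n i) + 1, ?_⟩
      simp only [Finset.mem_subtype, mem_tuples]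
      exact ⟨fun i => ⟨hpos i, Nat.lt_succ_of_le
        (Finset.single_le_sum (fun _ _ => Nat.zero_le _) (Finset.mem_univ i))⟩, hn⟩
  refine (hs.hasSum.comp htuples).congr fun N => ?_
  have hsub : ∀ n ∈ tuples N, Descends r n ∧ ∀ i, 0 < n i := fun n hn =>
    ⟨(mem_tuples.1 hn).2, fun i => ((mem_tuples.1 hn).1 i).1⟩
  rw [Function.comp_apply, Finset.sum_subtype_of_mem (fun n => ∏ i, y (n i) ^ k.get i) hsub]
  convert (nestedSum_eq_sum_descends r y k (Finset.Ico 1 N)).symm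

variable {𝕜 : Type*} [NormedField 𝕜] [CompleteSpace 𝕜] {y : ℕ → 𝕜}

theorem summable_descends_le (hy : y =O[atTop] fun n => (n : ℝ)⁻¹) {k : List ℕ}
    (hk : ∀ a ∈ k, 0 < a) :
    Summable fun n : {n : Fin (plusOne k).length → ℕ // Descends (· ≤ ·) n ∧ ∀ i, 0 < n i} =>
      ∏ i, y (n.1 i) ^ (plusOne k).get i := by
  cases k with
  | nil =>
    have : Finite (Fin (plusOne []).length → ℕ) := inferInstanceAs (Finite (Fin 0 → ℕ))
    exact .of_finite
  | cons a k =>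
    rw [descends_le_eq_antitone]
    refine summable_antitone_prod_pow hy (k := ((a + 1) :: k).get) ?_ fun i => ?_
    · exact Nat.succ_le_succ (hk a List.mem_cons_self)
    · refine Fin.cases (Nat.succ_pos a) (fun i => ?_) i
      exact hk _ (List.mem_cons_of_mem _ (k.get_mem i))

theorem summable_descends_lt (hy : y =O[atTop] fun n => (n : ℝ)⁻¹) {k : List ℕ}
    (hk : ∀ a ∈ k, 0 < a) :
    Summable fun n : {n : Fin (plusOne k).length → ℕ // Descends (· < ·) n ∧ ∀ i, 0 < n i} =>
      ∏ i, y (n.1 i) ^ (plusOne k).get i := by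
  let toLe : {n : Fin (plusOne k).length → ℕ // Descends (· < ·) n ∧ ∀ i, 0 < n i} →
      {n : Fin (plusOne k).length → ℕ // Descends (· ≤ ·) n ∧ ∀ i, 0 < n i} :=
    Subtype.map id fun n h => ⟨fun _ _ hij => (h.1 hij).le, h.2⟩
  exact (summable_descends_le hy hk).comp_injective
    (i := toLe) (Subtype.map_injective _ Function.injective_id)

theorem nestedSeries_le_plusOne_fromWord (hy : y =O[atTop] fun n => (n : ℝ)⁻¹) (w : List Bool) :
    nestedSeries (· ≤ ·) y (plusOne (fromWord w)) =
      ∑ v ∈ wordsBelow w, nestedSeries (· < ·) y (plusOne (fromWord v)) := by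
  have hle := tendsto_nestedSum (· ≤ ·) <|
    summable_descends_le hy fun _ => pos_of_mem_fromWord (w := w)
  have hlt := tendsto_finsetSum (wordsBelow w) fun v _ =>
    tendsto_nestedSum (· < ·) (summable_descends_lt hy fun _ => pos_of_mem_fromWord (w := v))
  exact tendsto_nhds_unique hle
    (hlt.congr fun N => (nestedSum_le_plusOne_fromWord y w (Finset.Ico 1 N)).symm)

end NestedSeries

theorem isBigO_inv_natCast_add_sub_one (β : ℂ) :
    (fun n : ℕ => ((n : ℂ) + β - 1)⁻¹) =O[atTop] fun n => (n : ℝ)⁻¹ := by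
  have hcast : (fun n : ℕ => (n : ℂ)) =Θ[atTop] fun n => (n : ℝ) :=
    .of_norm_eventuallyEq (.of_forall fun n => by simp)
  have hconst : (fun _ : ℕ => β - 1) =o[atTop] fun n => (n : ℂ) :=
    Asymptotics.isLittleO_const_left.2 (.inr <|
      (tendsto_natCast_atTop_atTop (R := ℝ)).congr fun n => by simp)
  have hshift : (fun n : ℕ => (n : ℂ) + (β - 1)) =Θ[atTop] fun n => (n : ℂ) :=
    hconst.right_isTheta_add'.symm
  simpa only [add_sub_assoc] using (hshift.trans hcast).inv.isBigO

theorem HMZV_eq_nestedSeries (k : List ℕ) (β : ℂ) :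
    HMZV k β = nestedSeries (· < ·) (fun n => ((n : ℂ) + β - 1)⁻¹) k := by
  rw [nestedSeries, descends_lt_eq_strictAnti]
  simp only [HMZV, zpow_neg, zpow_natCast, inv_pow]

theorem HMZSV_eq_nestedSeries (k : List ℕ) (β : ℂ) :
    HMZSV k β = nestedSeries (· ≤ ·) (fun n => ((n : ℂ) + β - 1)⁻¹) k := by
  rw [nestedSeries, descends_le_eq_antitone]
  simp only [HMZSV, zpow_neg, zpow_natCast, inv_pow]

theorem HMZSV_plusOne_fromWord (w : List Bool) (β : ℂ) :
    HMZSV (plusOne (fromWord w)) β = ∑ v ∈ wordsBelow w, HMZV (plusOne (fromWord v)) β := by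
  simp only [HMZSV_eq_nestedSeries, HMZV_eq_nestedSeries]
  exact nestedSeries_le_plusOne_fromWord (isBigO_inv_natCast_add_sub_one β) w

theorem stmt13 (k : List ℕ) (hk : k ≠ []) (hkpos : ∀ a ∈ k, 0 < a)
    (α : ℂ) (hα : ∀ j : ℕ, 0 < j → α ≠ (j : ℂ)) :
    (∑' l : {l : List ℕ // (∀ a ∈ l, 0 < a) ∧ Refines l k},
        HMZV (plusOne (HDual l.1.reverse)) (1 - α)) =
      HMZSV (plusOne (HDual k.reverse)) (1 - α) := by
  obtain ⟨w, rfl⟩ := exists_reverseDual_eq hk hkpos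
  let summand (l : List ℕ) : ℂ := HMZV (plusOne (HDual l.reverse)) (1 - α)
  calc ∑' l : {l | (∀ a ∈ l, 0 < a) ∧ Refines l (reverseDual w)}, summand l
      = ∑' v : (wordsBelow w : Set (List Bool)), summand (reverseDual v) := by
        rw [setOf_refines_reverseDual, tsum_image summand reverseDual_injective.injOn]
    _ = ∑ v ∈ wordsBelow w, HMZV (plusOne (fromWord v)) (1 - α) := by
        simp only [summand, HDual_reverse_reverseDual]
        exact Finset.tsum_subtype' _ fun v => HMZV (plusOne (fromWord v)) (1 - α)
    _ = HMZSV (plusOne (HDual (reverseDual w).reverse)) (1 - α) := by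
        rw [HDual_reverse_reverseDual, HMZSV_plusOne_fromWord]
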